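/- arXiv:1705.01052 — 3 statements merged into one kernel-verified Lean document; each statement's English description precedes it below -/
import Mathlib

section
/- Let s > 1, M > 0, and σ := 1/(s−1). Define φ_s : ℝ → ℝ by φ_s(ρ) := 1 for ρ ≤ 0, φ_s(ρ) := 0 for ρ ≥ 1, and φ_s(ρ) := e^{−M/(1−ρ)^σ} / (e^{−M/ρ^σ} + e^{−M/(1−ρ)^σ}) for ρ ∈ (0,1). Then φ_s is of class C^∞ on ℝ, φ_s^{(p)}(0) = φ_s^{(p)}(1) = 0 for all integers p ≥ 1, and φ_s is Gevrey of order s on every compact interval of ℝ: for every compact interval [a,b] there exist constants C, R > 0 such that |φ_s^{(p)}(ρ)| ≤ C (p!)^s / R^p for all ρ ∈ [a,b] and all integers p ≥ 0. -/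
open Real Set Filter

/-- The Gevrey step function of order `s > 1` with parameter `M > 0`,
where `σ = 1/(s-1)`. -/
noncomputable def phiStep (s M : ℝ) (ρ : ℝ) : ℝ :=
  if ρ ≤ 0 then 1
  else if 1 ≤ ρ then 0
  else Real.exp (-M / (1 - ρ) ^ ((s - 1)⁻¹)) /
    (Real.exp (-M / ρ ^ ((s - 1)⁻¹)) + Real.exp (-M / (1 - ρ) ^ ((s - 1)⁻¹)))

/-!
The reflected step `x ↦ φ (1 - x) = 1 - φ x` is, on `(0, 1)`, the sigmoid of
`M (1 - x) ^ (-σ) - M x ^ (-σ)`. Away from `0` and `1` it is analytic, hence Gevrey of order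
`1 ≤ s`, and by the reflection only `0` remains. It vanishes on the left of `0`, and on the right it
extends holomorphically to the disc of radius `c x` about `x` and is `O(exp (-m x ^ (-σ)))` on it.
Cauchy's estimate bounds the `p`-th derivative at `x` by a multiple of
`p! exp (-m x ^ (-σ)) / (c x) ^ p`. Writing `t = s - 1 = 1 / σ`, the inequality
`exp (-m x ^ (-σ)) ≤ (n!) ^ t (D x) ^ n` then trades the singular factor `x ^ (-p)` for
`(p!) ^ (s - 1)` when `n = p`, and shows that all derivatives are `O(x ^ 2)` when `n = p + 2`, so
that they extend by `0` across the origin. Local bounds are patched by compactness.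
-/

open Metric Asymptotics
open scoped Topology Nat NNReal

section Analytic

variable {𝕜 F : Type*} [NontriviallyNormedField 𝕜] [NormedAddCommGroup F] [NormedSpace 𝕜 F]

theorem differentiableAt_iteratedDeriv_of_analyticAt [CompleteSpace F] {f : 𝕜 → F} {x : 𝕜}
    (hf : AnalyticAt 𝕜 f x) (n : ℕ) : DifferentiableAt 𝕜 (iteratedDeriv n f) x := by
  rw [iteratedDeriv_eq_iterate]
  exact (hf.iterated_deriv n).differentiableAt

theorem exists_nnnorm_changeOrigin_mul_pow_le {E : Type*} [NormedAddCommGroup E] [NormedSpace 𝕜 E]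
    (p : FormalMultilinearSeries 𝕜 E F) {r r' : ℝ≥0} (h : (r + r' : ENNReal) < p.radius) :
    ∃ C : ℝ≥0, ∀ y : E, ‖y‖₊ ≤ r → ∀ n, ‖p.changeOrigin y n‖₊ * r' ^ n ≤ C := by
  have hsum := p.changeOriginSeries_summable_aux₁ h
  obtain ⟨hsum_inner, hsum_outer⟩ := NNReal.summable_sigma.1 hsum
  refine ⟨∑' n, ∑' k : Σ l : ℕ, { t : Finset (Fin (n + l)) // t.card = l },
    ‖p (n + k.1)‖₊ * r ^ k.1 * r' ^ n, fun y hy n ↦ ?_⟩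
  have hy_radius : (‖y‖₊ : ENNReal) < p.radius :=
    (ENNReal.coe_le_coe.2 hy).trans_lt (le_self_add.trans_lt h)
  have hterm (k : Σ l : ℕ, { t : Finset (Fin (n + l)) // t.card = l }) :
      ‖p (n + k.1)‖₊ * ‖y‖₊ ^ k.1 * r' ^ n ≤ ‖p (n + k.1)‖₊ * r ^ k.1 * r' ^ n := by gcongr
  calc ‖p.changeOrigin y n‖₊ * r' ^ n
      ≤ (∑' k : Σ l : ℕ, { t : Finset (Fin (n + l)) // t.card = l },
          ‖p (n + k.1)‖₊ * ‖y‖₊ ^ k.1) * r' ^ n := by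
        gcongr
        exact p.nnnorm_changeOrigin_le n hy_radius
    _ = ∑' k : Σ l : ℕ, { t : Finset (Fin (n + l)) // t.card = l },
          ‖p (n + k.1)‖₊ * ‖y‖₊ ^ k.1 * r' ^ n := (NNReal.tsum_mul_right _ _).symm
    _ ≤ ∑' k : Σ l : ℕ, { t : Finset (Fin (n + l)) // t.card = l },
          ‖p (n + k.1)‖₊ * r ^ k.1 * r' ^ n :=
        (NNReal.summable_of_le hterm (hsum_inner n)).tsum_le_tsum hterm (hsum_inner n)
    _ ≤ _ := hsum_outer.le_tsum n fun _ _ ↦ zero_le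

theorem exists_eventually_norm_iteratedDeriv_le_of_analyticAt [CompleteSpace F] {f : 𝕜 → F}
    {x₀ : 𝕜} (hf : AnalyticAt 𝕜 f x₀) :
    ∃ C R : ℝ, 0 < C ∧ 0 < R ∧ ∀ᶠ x in 𝓝 x₀, ∀ n : ℕ, ‖iteratedDeriv n f x‖ ≤ C * n ! / R ^ n := by
  obtain ⟨p, r, hp⟩ := hf
  obtain ⟨ρ, hρ, hρr⟩ := ENNReal.lt_iff_exists_nnreal_btwn.1 hp.r_pos
  have hρ0 : 0 < ρ / 2 := half_pos (ENNReal.coe_pos.1 hρ)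
  obtain ⟨C, hC⟩ := exists_nnnorm_changeOrigin_mul_pow_le p (r := ρ / 2) (r' := ρ / 2) (by
    rw [← ENNReal.coe_add, add_halves]
    exact hρr.trans_le hp.r_le)
  refine ⟨C + 1, (ρ / 2 : ℝ≥0), by positivity, hρ0, ?_⟩
  filter_upwards [closedBall_mem_nhds x₀ (NNReal.coe_pos.2 hρ0)] with x hx n
  have hy : ‖x - x₀‖₊ ≤ ρ / 2 := by
    rw [← NNReal.coe_le_coe, coe_nnnorm]
    exact mem_closedBall_iff_norm.1 hx
  have hyr : (‖x - x₀‖₊ : ENNReal) < r :=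
    (ENNReal.coe_le_coe.2 (hy.trans (half_le_self ρ.2))).trans_lt hρr
  have hpx : HasFPowerSeriesOnBall f (p.changeOrigin (x - x₀)) x (r - ‖x - x₀‖₊) := by
    simpa only [add_sub_cancel] using hp.changeOrigin hyr
  have hpn : ‖p.changeOrigin (x - x₀) n‖ * (ρ / 2 : ℝ≥0) ^ n ≤ C := by exact_mod_cast hC _ hy n
  have hn : ‖iteratedDeriv n f x‖ ≤ n ! * ‖p.changeOrigin (x - x₀) n‖ := by
    rw [iteratedDeriv_eq_iteratedFDeriv, ← hpx.factorial_smul]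
    refine norm_nsmul_le.trans ?_
    gcongr
    simp
  rw [le_div_iff₀ (pow_pos (NNReal.coe_pos.2 hρ0) n)]
  calc ‖iteratedDeriv n f x‖ * (ρ / 2 : ℝ≥0) ^ n
      ≤ n ! * ‖p.changeOrigin (x - x₀) n‖ * (ρ / 2 : ℝ≥0) ^ n := by gcongr
    _ = n ! * (‖p.changeOrigin (x - x₀) n‖ * (ρ / 2 : ℝ≥0) ^ n) := mul_assoc _ _ _
    _ ≤ n ! * (C + 1) := by gcongr; linarith
    _ = (C + 1) * n ! := mul_comm _ _

end Analytic

section Gevrey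

variable {E : Type*} [NormedAddCommGroup E] [NormedSpace ℝ E] {s : ℝ} {f : ℝ → E} {S T : Set ℝ}
  {a x : ℝ}

/-- `f` is smooth and Gevrey of order `s` on `S`. Smoothness means that every iterated derivative is
differentiable, from both sides, at every point of `S`, including the boundary points. -/
def GevreyOn (s : ℝ) (f : ℝ → E) (S : Set ℝ) : Prop :=
  ∃ C R : ℝ, 0 < C ∧ 0 < R ∧ ∀ x ∈ S, ∀ p : ℕ, DifferentiableAt ℝ (iteratedDeriv p f) x ∧
    ‖iteratedDeriv p f x‖ ≤ C * (p ! : ℝ) ^ s / R ^ p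

/-- `f` is Gevrey of order `s` on a neighbourhood of `x`. -/
def GevreyAt (s : ℝ) (f : ℝ → E) (x : ℝ) : Prop :=
  ∃ U ∈ 𝓝 x, GevreyOn s f U

theorem GevreyOn.mono (h : GevreyOn s f T) (hST : S ⊆ T) : GevreyOn s f S := by
  obtain ⟨C, R, hC, hR, hf⟩ := h
  exact ⟨C, R, hC, hR, fun x hx ↦ hf x (hST hx)⟩

theorem GevreyOn.union (hS : GevreyOn s f S) (hT : GevreyOn s f T) : GevreyOn s f (S ∪ T) := by
  obtain ⟨C, R, hC, hR, hfS⟩ := hS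
  obtain ⟨C', R', _, hR', hfT⟩ := hT
  have hR_min : 0 < min R R' := lt_min hR hR'
  refine ⟨max C C', min R R', lt_max_of_lt_left hC, hR_min, ?_⟩
  rintro x (hx | hx) p
  · refine ⟨(hfS x hx p).1, (hfS x hx p).2.trans ?_⟩
    gcongr
    exacts [le_max_left _ _, min_le_left _ _]
  · refine ⟨(hfT x hx p).1, (hfT x hx p).2.trans ?_⟩
    gcongr
    exacts [le_max_right _ _, min_le_right _ _]

theorem gevreyOn_of_isCompact (hS : IsCompact S) (hf : ∀ x ∈ S, GevreyAt s f x) :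
    GevreyOn s f S :=
  hS.induction_on ⟨1, 1, one_pos, one_pos, fun _ hx ↦ hx.elim⟩ (fun _ _ hST hT ↦ hT.mono hST)
    (fun _ _ ↦ GevreyOn.union) fun x hx ↦
      let ⟨U, hU, hfU⟩ := hf x hx
      ⟨U, mem_nhdsWithin_of_mem_nhds hU, hfU⟩

theorem GevreyAt.differentiableAt_iteratedDeriv (hf : GevreyAt s f x) (p : ℕ) :
    DifferentiableAt ℝ (iteratedDeriv p f) x := by
  obtain ⟨U, hU, C, R, -, -, h⟩ := hf
  exact (h x (mem_of_mem_nhds hU) p).1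

theorem gevreyAt_of_analyticAt [CompleteSpace E] (hs : 1 ≤ s) (hf : AnalyticAt ℝ f x) :
    GevreyAt s f x := by
  obtain ⟨C, R, hC, hR, hbound⟩ := exists_eventually_norm_iteratedDeriv_le_of_analyticAt hf
  refine ⟨_, hf.eventually_analyticAt.and hbound, C, R, hC, hR, fun y hy p ↦
    ⟨differentiableAt_iteratedDeriv_of_analyticAt hy.1 p, (hy.2 p).trans ?_⟩⟩
  have hfact : (1 : ℝ) ≤ p ! := mod_cast p.factorial_pos
  gcongr
  exact Real.self_le_rpow_of_one_le hfact hs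

theorem GevreyAt.const_sub (hf : GevreyAt s f x) (c : E) : GevreyAt s (fun y ↦ c - f y) x := by
  obtain ⟨U, hU, C, R, hC, hR, h⟩ := hf
  refine ⟨U, hU, ‖c‖ + C, R, by positivity, hR, fun y hy p ↦ ?_⟩
  obtain ⟨hdiff, hbound⟩ := h y hy p
  rcases p.eq_zero_or_pos with rfl | hp
  · simp only [iteratedDeriv_zero, Nat.factorial_zero, Nat.cast_one, Real.one_rpow, mul_one,
      pow_zero, div_one] at hdiff hbound ⊢
    exact ⟨hdiff.const_sub c, (norm_sub_le _ _).trans (by gcongr)⟩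
  · have hderiv : iteratedDeriv p (fun y ↦ c - f y) = -iteratedDeriv p f := by
      ext y
      rw [iteratedDeriv_const_sub hp, iteratedDeriv_neg, Pi.neg_apply]
    rw [hderiv, Pi.neg_apply, norm_neg]
    refine ⟨hdiff.neg, hbound.trans ?_⟩
    gcongr
    exact le_add_of_nonneg_left (norm_nonneg c)

theorem GevreyAt.comp_const_sub {c : ℝ} (hf : GevreyAt s f (c - x)) :
    GevreyAt s (fun y ↦ f (c - y)) x := by
  obtain ⟨U, hU, C, R, hC, hR, h⟩ := hf
  have hcont : Continuous fun y : ℝ ↦ c - y := by fun_prop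
  refine ⟨_, hcont.continuousAt.preimage_mem_nhds hU, C, R, hC, hR, fun y hy p ↦ ?_⟩
  obtain ⟨hdiff, hbound⟩ := h (c - y) hy p
  rw [iteratedDeriv_comp_const_sub]
  refine ⟨(hdiff.comp y (by fun_prop : DifferentiableAt ℝ (c - ·) y)).const_smul _, ?_⟩
  simpa [norm_smul] using hbound

theorem hasDerivAt_iteratedDeriv_of_isLittleO (hf : ∀ x ≤ a, f x = 0)
    (ho : ∀ p, iteratedDeriv p f =o[𝓝[>] a] fun x ↦ x - a) (p : ℕ) (hx : x ≤ a) :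
    iteratedDeriv p f x = 0 ∧ HasDerivAt (iteratedDeriv p f) 0 x := by
  have hleft (p : ℕ) {x : ℝ} (hx : x < a) : iteratedDeriv p f =ᶠ[𝓝 x] 0 := by
    have hf0 : f =ᶠ[𝓝 x] 0 := by
      filter_upwards [Iio_mem_nhds hx] with y hy using hf y hy.le
    exact (hf0.iteratedDeriv p).trans (.of_eq (by ext; simp [Pi.zero_def]))
  have hderiv_a (p : ℕ) (h0 : iteratedDeriv p f a = 0) : HasDerivAt (iteratedDeriv p f) 0 a := by
    have hzero : (0 : ℝ → E) =ᶠ[𝓝[≤] a] iteratedDeriv p f := by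
      filter_upwards [self_mem_nhdsWithin] with y hy
      rcases (mem_Iic.1 hy).lt_or_eq with hy | rfl
      exacts [(hleft p hy).eq_of_nhds.symm, h0.symm]
    have hle : iteratedDeriv p f =o[𝓝[≤] a] fun x ↦ x - a :=
      (isLittleO_zero _ _).congr' hzero .rfl
    rw [hasDerivAt_iff_isLittleO, ← nhdsLE_sup_nhdsGT]
    simpa [h0] using hle.sup (ho p)
  have hzero_a : iteratedDeriv p f a = 0 := by
    induction p with
    | zero => simpa using hf a le_rfl
    | succ p ih => rw [iteratedDeriv_succ, (hderiv_a p ih).deriv]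
  rcases hx.lt_or_eq with hx | rfl
  · exact ⟨(hleft p hx).eq_of_nhds, (hasDerivAt_const x 0).congr_of_eventuallyEq (hleft p hx)⟩
  · exact ⟨hzero_a, hderiv_a p hzero_a⟩

end Gevrey

section ExpFlat

variable {t m : ℝ}

theorem exp_neg_mul_rpow_le {x : ℝ} (ht : 0 < t) (hm : 0 < m) (hx : 0 < x) (n : ℕ) :
    Real.exp (-(m * x ^ (-t⁻¹))) ≤ (n ! : ℝ) ^ t * ((t / m) ^ t * x) ^ n := by
  set v := m / t * x ^ (-t⁻¹) with hv_def
  have hv : 0 < v := by positivity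
  have hv_mul : v * -t = -(m * x ^ (-t⁻¹)) := by rw [hv_def]; field_simp
  have hv_rpow : v ^ (-t) = (t / m) ^ t * x := by
    rw [hv_def, Real.mul_rpow (by positivity) (by positivity), ← Real.rpow_mul hx.le,
      neg_mul_neg, inv_mul_cancel₀ ht.ne', Real.rpow_one, Real.rpow_neg (by positivity),
      ← Real.inv_rpow (by positivity), inv_div]
  calc Real.exp (-(m * x ^ (-t⁻¹))) = Real.exp v ^ (-t) := by rw [← Real.exp_mul, hv_mul]
    _ ≤ (v ^ n / n !) ^ (-t) :=
        Real.rpow_le_rpow_of_nonpos (by positivity) (Real.pow_div_factorial_le_exp v hv.le n)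
          (by linarith)
    _ = (n ! : ℝ) ^ t * (v ^ (-t)) ^ n := by
        rw [Real.div_rpow (by positivity) (by positivity), ← Real.rpow_pow_comm hv.le,
          Real.rpow_neg (Nat.cast_nonneg _), div_inv_eq_mul, mul_comm]
    _ = _ := by rw [hv_rpow]

variable {E : Type*} [NormedAddCommGroup E] [NormedSpace ℝ E] {f : ℝ → E} {c K : ℝ}

theorem factorial_mul_exp_div_pow_le {x : ℝ} (ht : 0 < t) (hm : 0 < m) (hc : 0 < c) (hK : 0 ≤ K)
    (hx : 0 < x) (p k : ℕ) :
    p ! * (K * Real.exp (-(m * x ^ (-t⁻¹)))) / (c * x) ^ p ≤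
      K * (p ! * ((p + k)! : ℝ) ^ t) * ((t / m) ^ t) ^ (p + k) / c ^ p * x ^ k := by
  calc p ! * (K * Real.exp (-(m * x ^ (-t⁻¹)))) / (c * x) ^ p
      ≤ p ! * (K * (((p + k)! : ℝ) ^ t * ((t / m) ^ t * x) ^ (p + k))) / (c * x) ^ p := by
        gcongr
        exact exp_neg_mul_rpow_le ht hm hx (p + k)
    _ = _ := by
        rw [mul_pow, mul_pow, pow_add x]
        field_simp

theorem hasDerivAt_iteratedDeriv_of_le_exp {x : ℝ} (ht : 0 < t) (hm : 0 < m) (hc : 0 < c)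
    (hK : 0 ≤ K) (hf_nonpos : ∀ x ≤ 0, f x = 0)
    (hf : ∀ᶠ x in 𝓝[>] (0 : ℝ), ∀ p : ℕ,
      ‖iteratedDeriv p f x‖ ≤ p ! * (K * Real.exp (-(m * x ^ (-t⁻¹)))) / (c * x) ^ p)
    (p : ℕ) (hx : x ≤ 0) : iteratedDeriv p f x = 0 ∧ HasDerivAt (iteratedDeriv p f) 0 x := by
  refine hasDerivAt_iteratedDeriv_of_isLittleO hf_nonpos (fun p ↦ ?_) p hx
  have hsq : iteratedDeriv p f =O[𝓝[>] 0] fun x : ℝ ↦ x ^ 2 := by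
    refine .of_bound (K * (p ! * ((p + 2)! : ℝ) ^ t) * ((t / m) ^ t) ^ (p + 2) / c ^ p) ?_
    filter_upwards [hf, self_mem_nhdsWithin] with x hfx hx
    rw [norm_of_nonneg (sq_nonneg x)]
    exact (hfx p).trans (factorial_mul_exp_div_pow_le ht hm hc hK hx p 2)
  simp only [sub_zero]
  exact hsq.trans_isLittleO ((isLittleO_pow_id one_lt_two).mono nhdsWithin_le_nhds)

theorem gevreyAt_zero_of_le_exp (ht : 0 < t) (hm : 0 < m) (hc : 0 < c) (hK : 0 < K)
    (hf_nonpos : ∀ x ≤ 0, f x = 0)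
    (hf_diff : ∀ᶠ x in 𝓝[>] (0 : ℝ), ∀ p, DifferentiableAt ℝ (iteratedDeriv p f) x)
    (hf : ∀ᶠ x in 𝓝[>] (0 : ℝ), ∀ p : ℕ,
      ‖iteratedDeriv p f x‖ ≤ p ! * (K * Real.exp (-(m * x ^ (-t⁻¹)))) / (c * x) ^ p) :
    GevreyAt (1 + t) f 0 := by
  refine ⟨_, eventually_nhdsWithin_iff.1 (hf_diff.and hf), K, c / (t / m) ^ t, hK, by positivity,
    fun x hx p ↦ ?_⟩
  rcases le_or_gt x 0 with hx0 | hx0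
  · obtain ⟨hzero, hderiv⟩ :=
      hasDerivAt_iteratedDeriv_of_le_exp ht hm hc hK.le hf_nonpos hf p hx0
    rw [hzero, norm_zero]
    exact ⟨hderiv.differentiableAt, by positivity⟩
  · refine ⟨(hx hx0).1 p, ((hx hx0).2 p).trans ?_⟩
    calc p ! * (K * Real.exp (-(m * x ^ (-t⁻¹)))) / (c * x) ^ p
        ≤ K * (p ! * (p ! : ℝ) ^ t) * ((t / m) ^ t) ^ p / c ^ p * x ^ 0 :=
          factorial_mul_exp_div_pow_le ht hm hc hK.le hx0 p 0
      _ = K * (p ! : ℝ) ^ (1 + t) / (c / (t / m) ^ t) ^ p := by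
          rw [Real.rpow_add (by positivity), Real.rpow_one, div_pow]
          field_simp

end ExpFlat

section Complex

theorem iteratedDeriv_re_ofReal {F : ℂ → ℂ} {x : ℝ} (hF : AnalyticAt ℂ F x) (n : ℕ) :
    iteratedDeriv n (fun t : ℝ ↦ (F t).re) x = (iteratedDeriv n F x).re := by
  induction n generalizing F with
  | zero => simp only [iteratedDeriv_zero]
  | succ n ih =>
    have hderiv : deriv (fun t : ℝ ↦ (F t).re) =ᶠ[𝓝 x] fun t : ℝ ↦ (deriv F t).re := by
      have hF_near := Complex.continuous_ofReal.continuousAt.eventually hF.eventually_analyticAt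
      filter_upwards [hF_near] with t ht
      exact ht.differentiableAt.hasDerivAt.real_of_complex.deriv
    rw [iteratedDeriv_succ', iteratedDeriv_succ', hderiv.iteratedDeriv_eq, ih hF.deriv]

theorem abs_iteratedDeriv_le_of_eventuallyEq_re {F : ℂ → ℂ} {f : ℝ → ℝ} {x r K : ℝ} (hr : 0 < r)
    (hF : DiffContOnCl ℂ F (ball x r)) (hK : ∀ z ∈ sphere (x : ℂ) r, ‖F z‖ ≤ K)
    (hf : f =ᶠ[𝓝 x] fun t ↦ (F t).re) (n : ℕ) : |iteratedDeriv n f x| ≤ n ! * K / r ^ n := by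
  have hF_x : AnalyticAt ℂ F x := hF.differentiableOn.analyticAt (ball_mem_nhds _ hr)
  rw [hf.iteratedDeriv_eq, iteratedDeriv_re_ofReal hF_x]
  exact (Complex.abs_re_le_norm _).trans
    (Complex.norm_iteratedDeriv_le_of_forall_mem_sphere_norm_le n hr hF hK)

theorem ofReal_mul_cpow {x : ℝ} (hx : 0 < x) (w a : ℂ) :
    ((x : ℂ) * w) ^ a = (x : ℂ) ^ a * w ^ a := by
  have hx0 : (x : ℂ) ≠ 0 := Complex.ofReal_ne_zero.2 hx.ne'
  rcases eq_or_ne w 0 with rfl | hw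
  · rcases eq_or_ne a 0 with rfl | ha
    · simp
    · simp [ha]
  · rw [Complex.cpow_def_of_ne_zero (mul_ne_zero hx0 hw), Complex.log_ofReal_mul hx hw,
      Complex.cpow_def_of_ne_zero hx0, Complex.cpow_def_of_ne_zero hw, ← Complex.exp_add,
      Complex.ofReal_log hx.le, add_mul]

theorem ofReal_mul_mem_slitPlane {x : ℝ} (hx : 0 < x) {w : ℂ} (hw : w ∈ Complex.slitPlane) :
    (x : ℂ) * w ∈ Complex.slitPlane := by
  simpa [Complex.mem_slitPlane_iff, hx, hx.ne'] using hw

theorem norm_inv_one_add_exp_le {w : ℂ} (hw : Real.log 2 ≤ w.re) :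
    1 + Complex.exp w ≠ 0 ∧ ‖(1 + Complex.exp w)⁻¹‖ ≤ 2 * Real.exp (-w.re) := by
  have htwo : 2 ≤ Real.exp w.re := (Real.log_le_iff_le_exp two_pos).1 hw
  have hlower : Real.exp w.re / 2 ≤ ‖1 + Complex.exp w‖ := by
    have htriangle := norm_sub_le (1 + Complex.exp w) 1
    rw [add_sub_cancel_left, Complex.norm_exp, norm_one] at htriangle
    linarith
  refine ⟨norm_pos_iff.1 (by linarith), ?_⟩
  calc ‖(1 + Complex.exp w)⁻¹‖ = ‖1 + Complex.exp w‖⁻¹ := norm_inv _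
    _ ≤ (Real.exp w.re / 2)⁻¹ := by gcongr
    _ = 2 * Real.exp (-w.re) := by rw [inv_div, Real.exp_neg, div_eq_mul_inv]

theorem exists_closedBall_one_re_cpow_bounds (a : ℂ) :
    ∃ δ > 0, ∀ w ∈ closedBall (1 : ℂ) δ,
      w ∈ Complex.slitPlane ∧ 1 / 2 ≤ (w ^ a).re ∧ (w ^ a).re ≤ 2 := by
  have hcont : ContinuousAt (fun w : ℂ ↦ (w ^ a).re) 1 :=
    Complex.continuous_re.continuousAt.comp
      (continuousAt_id.cpow continuousAt_const Complex.one_mem_slitPlane)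
  have hrange : Icc (1 / 2 : ℝ) 2 ∈ 𝓝 ((1 : ℂ) ^ a).re := by
    rw [Complex.one_cpow, Complex.one_re]
    exact Icc_mem_nhds (by norm_num) (by norm_num)
  have hslit : ∀ᶠ w in 𝓝 (1 : ℂ), w ∈ Complex.slitPlane :=
    Complex.isOpen_slitPlane.mem_nhds Complex.one_mem_slitPlane
  exact nhds_basis_closedBall.eventually_iff.1 (hslit.and (hcont.eventually hrange))

end Complex

section Ramp

variable {σ M : ℝ}

/-- The exponent `M z ^ (-σ) - M (1 - z) ^ (-σ)`, on the complex plane. Near `0` it is dominated by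
its first term. -/
noncomputable def rampExponent (σ M : ℝ) (z : ℂ) : ℂ :=
  M * z ^ (-σ : ℂ) - M * (1 - z) ^ (-σ : ℂ)

/-- The holomorphic extension of the reflected step `x ↦ phiStep s M (1 - x)`, where
`σ = (s - 1)⁻¹`, from `(0, 1)` to complex neighbourhoods of its points. -/
noncomputable def complexRamp (σ M : ℝ) (z : ℂ) : ℂ :=
  (1 + Complex.exp (rampExponent σ M z))⁻¹

theorem rampExponent_ofReal {x : ℝ} (hx : x ∈ Ioo 0 1) :
    rampExponent σ M x = (M * x ^ (-σ) - M * (1 - x) ^ (-σ) : ℝ) := by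
  have hx1 : 0 ≤ 1 - x := sub_nonneg.2 hx.2.le
  simp [rampExponent, Complex.ofReal_cpow hx.1.le, Complex.ofReal_cpow hx1]

theorem analyticAt_complexRamp {z : ℂ} (hz : z ∈ Complex.slitPlane)
    (hz' : 1 - z ∈ Complex.slitPlane) (h0 : 1 + Complex.exp (rampExponent σ M z) ≠ 0) :
    AnalyticAt ℂ (complexRamp σ M) z := by
  have hexponent : AnalyticAt ℂ (rampExponent σ M) z := by
    unfold rampExponent
    fun_prop (disch := assumption)
  exact (analyticAt_const.add hexponent.cexp').inv h0

theorem exists_eventually_le_re_rampExponent (σ : ℝ) (hM : 0 ≤ M) :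
    ∃ c > 0, ∀ᶠ x : ℝ in 𝓝[>] 0, ∀ z ∈ closedBall (x : ℂ) (c * x),
      z ∈ Complex.slitPlane ∧ 1 - z ∈ Complex.slitPlane ∧
        M / 2 * x ^ (-σ) - 2 * M ≤ (rampExponent σ M z).re := by
  obtain ⟨δ, hδ, hball⟩ := exists_closedBall_one_re_cpow_bounds (-σ : ℂ)
  refine ⟨δ, hδ, ?_⟩
  have hsmall : ∀ᶠ x : ℝ in 𝓝[>] 0, (1 + δ) * x ≤ δ := by
    have : Tendsto (fun x : ℝ ↦ (1 + δ) * x) (𝓝[>] 0) (𝓝 ((1 + δ) * 0)) :=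
      (tendsto_id.const_mul _).mono_left nhdsWithin_le_nhds
    exact this.eventually_le_const (by simpa using hδ)
  filter_upwards [hsmall, self_mem_nhdsWithin] with x hxδ (hx : 0 < x) z hz
  have hx0 : (x : ℂ) ≠ 0 := Complex.ofReal_ne_zero.2 hx.ne'
  obtain ⟨w, rfl⟩ : ∃ w, z = x * w := ⟨z / x, (mul_div_cancel₀ z hx0).symm⟩
  have hdist : ‖(x : ℂ) * w - x‖ ≤ δ * x := mem_closedBall_iff_norm.1 hz
  have hw : w ∈ closedBall (1 : ℂ) δ := by
    rw [← mul_sub_one, norm_mul, Complex.norm_real, norm_of_nonneg hx.le, mul_comm] at hdist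
    exact mem_closedBall_iff_norm.2 (le_of_mul_le_mul_right hdist hx)
  have hz' : 1 - (x : ℂ) * w ∈ closedBall (1 : ℂ) δ := by
    rw [mem_closedBall_iff_norm, sub_sub_cancel_left, norm_neg]
    calc ‖(x : ℂ) * w‖ ≤ ‖(x : ℂ) * w - x‖ + ‖(x : ℂ)‖ := norm_le_norm_sub_add _ _
      _ ≤ δ * x + x := by
          rw [Complex.norm_real, norm_of_nonneg hx.le]
          gcongr
      _ ≤ δ := by linarith
  obtain ⟨hw_slit, hw_re, -⟩ := hball w hw
  obtain ⟨hz'_slit, -, hz'_re⟩ := hball _ hz'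
  refine ⟨ofReal_mul_mem_slitPlane hx hw_slit, hz'_slit, ?_⟩
  have hfirst : (((x : ℂ) * w) ^ (-σ : ℂ)).re = x ^ (-σ) * (w ^ (-σ : ℂ)).re := by
    rw [ofReal_mul_cpow hx, ← Complex.ofReal_neg, ← Complex.ofReal_cpow hx.le,
      Complex.re_ofReal_mul]
  rw [rampExponent, Complex.sub_re, Complex.re_ofReal_mul, Complex.re_ofReal_mul, hfirst]
  calc M / 2 * x ^ (-σ) - 2 * M = M * (x ^ (-σ) * (1 / 2)) - M * 2 := by ring
    _ ≤ _ := by gcongr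

theorem exists_eventually_norm_complexRamp_le (hσ : 0 < σ) (hM : 0 < M) :
    ∃ c > 0, ∀ᶠ x : ℝ in 𝓝[>] 0, ∀ z ∈ closedBall (x : ℂ) (c * x),
      AnalyticAt ℂ (complexRamp σ M) z ∧
        ‖complexRamp σ M z‖ ≤ 2 * Real.exp (2 * M) * Real.exp (-(M / 2 * x ^ (-σ))) := by
  obtain ⟨c, hc, hre⟩ := exists_eventually_le_re_rampExponent σ hM.le
  refine ⟨c, hc, ?_⟩
  have hlarge : ∀ᶠ x : ℝ in 𝓝[>] 0, Real.log 2 ≤ M / 2 * x ^ (-σ) - 2 * M :=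
    (tendsto_atTop_add_const_right _ (-(2 * M)) ((tendsto_rpow_neg_nhdsGT_zero
      (neg_neg_iff_pos.2 hσ)).const_mul_atTop (half_pos hM))).eventually_ge_atTop _
  filter_upwards [hre, hlarge] with x hx hxlog z hz
  obtain ⟨hz_slit, hz'_slit, hz_re⟩ := hx z hz
  obtain ⟨hne, hnorm⟩ := norm_inv_one_add_exp_le (hxlog.trans hz_re)
  refine ⟨analyticAt_complexRamp hz_slit hz'_slit hne, hnorm.trans ?_⟩
  calc 2 * Real.exp (-(rampExponent σ M z).re)
      ≤ 2 * Real.exp (-(M / 2 * x ^ (-σ) - 2 * M)) := by gcongr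
    _ = 2 * Real.exp (2 * M) * Real.exp (-(M / 2 * x ^ (-σ))) := by
        rw [mul_assoc, ← Real.exp_add]
        ring_nf

end Ramp

section PhiStep

variable {s M x : ℝ}

theorem phiStep_of_nonpos (hx : x ≤ 0) : phiStep s M x = 1 := if_pos hx

theorem phiStep_of_one_le (hx : 1 ≤ x) : phiStep s M x = 0 := by
  rw [phiStep, if_neg (by linarith), if_pos hx]

theorem phiStep_eq_sigmoid (hx : x ∈ Ioo 0 1) :
    phiStep s M x = Real.sigmoid (M * x ^ (-(s - 1)⁻¹) - M * (1 - x) ^ (-(s - 1)⁻¹)) := by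
  rw [phiStep, if_neg hx.1.not_ge, if_neg hx.2.not_ge, Real.sigmoid_def,
    Real.rpow_neg hx.1.le, Real.rpow_neg (sub_nonneg.2 hx.2.le), neg_div, neg_div,
    ← div_eq_mul_inv, ← div_eq_mul_inv, neg_sub, Real.exp_sub,
    Real.exp_neg, Real.exp_neg]
  field_simp
  exact add_comm _ _

theorem phiStep_one_sub (s M x : ℝ) : phiStep s M (1 - x) = 1 - phiStep s M x := by
  rcases le_or_gt x 0 with h0 | h0
  · rw [phiStep_of_nonpos h0, phiStep_of_one_le (by linarith), sub_self]
  rcases le_or_gt 1 x with h1 | h1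
  · rw [phiStep_of_one_le h1, phiStep_of_nonpos (by linarith), sub_zero]
  rw [phiStep_eq_sigmoid ⟨h0, h1⟩, phiStep_eq_sigmoid ⟨by linarith, by linarith⟩, sub_sub_cancel,
    ← Real.sigmoid_neg, neg_sub]

theorem phiStep_one_sub_eq_re_complexRamp (hx : x ∈ Ioo 0 1) :
    phiStep s M (1 - x) = (complexRamp (s - 1)⁻¹ M x).re := by
  rw [phiStep_one_sub, phiStep_eq_sigmoid hx, ← Real.sigmoid_neg, Real.sigmoid_def, neg_neg,
    complexRamp, rampExponent_ofReal hx]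
  norm_cast

theorem analyticAt_phiStep (s M : ℝ) (h0 : x ≠ 0) (h1 : x ≠ 1) : AnalyticAt ℝ (phiStep s M) x := by
  rcases h0.lt_or_gt with hneg | hpos
  · refine (analyticAt_const (v := (1 : ℝ))).congr ?_
    filter_upwards [Iio_mem_nhds hneg] with y hy using (phiStep_of_nonpos hy.le).symm
  rcases h1.lt_or_gt with hlt | hgt
  · have hrpow {y : ℝ} (hy : 0 < y) : AnalyticAt ℝ (fun y : ℝ ↦ y ^ (-(s - 1)⁻¹)) y :=
      (Real.contDiffAt_rpow_const_of_ne (n := ⊤) hy.ne').analyticAt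
    have hrpow' : AnalyticAt ℝ (fun y : ℝ ↦ (1 - y) ^ (-(s - 1)⁻¹)) x :=
      (hrpow (sub_pos.2 hlt)).fun_comp (by fun_prop)
    have hsigmoid := ((analyticAt_const (v := M)).mul (hrpow hpos)).sub
      ((analyticAt_const (v := M)).mul hrpow') |>.sigmoid'
    refine hsigmoid.congr ?_
    filter_upwards [Ioo_mem_nhds hpos hlt] with y hy using (phiStep_eq_sigmoid hy).symm
  · refine (analyticAt_const (v := (0 : ℝ))).congr ?_
    filter_upwards [Ioi_mem_nhds hgt] with y hy using (phiStep_of_one_le hy.le).symm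

theorem exists_eventually_norm_iteratedDeriv_phiStep_one_sub_le (hs : 1 < s) (hM : 0 < M) :
    ∃ c > 0, ∀ᶠ x : ℝ in 𝓝[>] 0, ∀ p : ℕ,
      ‖iteratedDeriv p (fun y ↦ phiStep s M (1 - y)) x‖ ≤
        p ! * (2 * Real.exp (2 * M) * Real.exp (-(M / 2 * x ^ (-(s - 1)⁻¹)))) / (c * x) ^ p := by
  obtain ⟨c, hc, hramp⟩ :=
    exists_eventually_norm_complexRamp_le (inv_pos.2 (sub_pos.2 hs)) hM
  refine ⟨c, hc, ?_⟩
  filter_upwards [hramp, Ioo_mem_nhdsGT one_pos] with x hx hx01 p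
  have hcx : 0 < c * x := mul_pos hc hx01.1
  refine abs_iteratedDeriv_le_of_eventuallyEq_re (F := complexRamp (s - 1)⁻¹ M) hcx ?_
    (fun z hz ↦ (hx z (sphere_subset_closedBall hz)).2) ?_ p
  · refine DifferentiableOn.diffContOnCl fun z hz ↦ ?_
    rw [closure_ball _ hcx.ne'] at hz
    exact (hx z hz).1.differentiableAt.differentiableWithinAt
  · filter_upwards [Ioo_mem_nhds hx01.1 hx01.2] with y hy
    exact phiStep_one_sub_eq_re_complexRamp hy

theorem iteratedDeriv_phiStep_one_sub_zero (hs : 1 < s) (hM : 0 < M) (p : ℕ) :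
    iteratedDeriv p (fun y ↦ phiStep s M (1 - y)) 0 = 0 := by
  obtain ⟨c, hc, hbound⟩ := exists_eventually_norm_iteratedDeriv_phiStep_one_sub_le hs hM
  exact (hasDerivAt_iteratedDeriv_of_le_exp (sub_pos.2 hs) (half_pos hM) hc (by positivity)
    (fun x hx ↦ phiStep_of_one_le (by linarith)) hbound p le_rfl).1

theorem gevreyAt_phiStep_one_sub_zero (hs : 1 < s) (hM : 0 < M) :
    GevreyAt s (fun y ↦ phiStep s M (1 - y)) 0 := by
  obtain ⟨c, hc, hbound⟩ := exists_eventually_norm_iteratedDeriv_phiStep_one_sub_le hs hM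
  have hdiff : ∀ᶠ x : ℝ in 𝓝[>] 0, ∀ p,
      DifferentiableAt ℝ (iteratedDeriv p fun y ↦ phiStep s M (1 - y)) x := by
    filter_upwards [Ioo_mem_nhdsGT one_pos] with x hx p
    have hanalytic : AnalyticAt ℝ (phiStep s M) (1 - x) :=
      analyticAt_phiStep s M (sub_pos.2 hx.2).ne' (by linarith [hx.1])
    exact differentiableAt_iteratedDeriv_of_analyticAt (hanalytic.fun_comp (by fun_prop)) p
  simpa only [add_sub_cancel] using gevreyAt_zero_of_le_exp (sub_pos.2 hs) (half_pos hM) hc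
    (by positivity) (fun x hx ↦ phiStep_of_one_le (by linarith)) hdiff hbound

theorem gevreyAt_phiStep (hs : 1 < s) (hM : 0 < M) (x : ℝ) : GevreyAt s (phiStep s M) x := by
  have hramp := gevreyAt_phiStep_one_sub_zero hs hM
  by_cases h0 : x = 0
  · subst h0
    simpa only [phiStep_one_sub, sub_sub_cancel] using hramp.const_sub 1
  by_cases h1 : x = 1
  · subst h1
    rw [← sub_self (1 : ℝ)] at hramp
    simpa only [sub_sub_cancel] using hramp.comp_const_sub
  · exact gevreyAt_of_analyticAt hs.le (analyticAt_phiStep s M h0 h1)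

theorem iteratedDeriv_phiStep_one (hs : 1 < s) (hM : 0 < M) (p : ℕ) :
    iteratedDeriv p (phiStep s M) 1 = 0 := by
  simpa [iteratedDeriv_comp_const_sub] using iteratedDeriv_phiStep_one_sub_zero hs hM p

theorem iteratedDeriv_phiStep_zero (hs : 1 < s) (hM : 0 < M) {p : ℕ} (hp : 0 < p) :
    iteratedDeriv p (phiStep s M) 0 = 0 := by
  have h := iteratedDeriv_phiStep_one_sub_zero hs hM p
  simp only [phiStep_one_sub] at h
  rwa [iteratedDeriv_const_sub hp, iteratedDeriv_neg, neg_eq_zero] at h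

end PhiStep

theorem stmt12 (s M : ℝ) (hs : 1 < s) (hM : 0 < M) :
    -- φ_s is C^∞ on ℝ
    ContDiff ℝ (⊤ : ℕ∞) (phiStep s M) ∧
    -- all derivatives of φ_s vanish at 0 and at 1
    (∀ p : ℕ, 1 ≤ p → iteratedDeriv p (phiStep s M) 0 = 0 ∧
      iteratedDeriv p (phiStep s M) 1 = 0) ∧
    -- φ_s is Gevrey of order s on every compact interval
    (∀ a b : ℝ, a ≤ b →
      ∃ C R : ℝ, 0 < C ∧ 0 < R ∧
        ∀ p : ℕ, ∀ ρ ∈ Set.Icc a b,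
          |iteratedDeriv p (phiStep s M) ρ| ≤ C * (p.factorial : ℝ) ^ s / R ^ p) := by
  have hGevrey (x : ℝ) : GevreyAt s (phiStep s M) x := gevreyAt_phiStep hs hM x
  refine ⟨?_, fun p hp ↦ ?_, fun a b _ ↦ ?_⟩
  · exact contDiff_of_differentiable_iteratedDeriv fun p _ x ↦
      (hGevrey x).differentiableAt_iteratedDeriv p
  · exact ⟨iteratedDeriv_phiStep_zero hs hM hp, iteratedDeriv_phiStep_one hs hM p⟩
  · obtain ⟨C, R, hC, hR, hbound⟩ := gevreyOn_of_isCompact isCompact_Icc fun x _ ↦ hGevrey x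
    exact ⟨C, R, hC, hR, fun p ρ hρ ↦ (hbound ρ hρ p).2⟩
end

section
/- Let A > 0. There exists a constant M(A) > 0 such that for every integer k ≥ 0 and every complex number z with |z| ≤ A, |e^{−z²/2} H_k(z)| ≤ M(A) · Γ(k+1)/Γ(k/2+1) · e^{A√(2k)}, where H_k is the k-th physicists' Hermite polynomial. -/
open Complex Real

/-- The physicists' Hermite polynomials: `H₀ = 1`, `H₁(z) = 2z`,
`H_{k+1}(z) = 2z H_k(z) - 2k H_{k-1}(z)`. -/
noncomputable def hermiteP : ℕ → ℂ → ℂ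
  | 0, _ => 1
  | 1, z => 2 * z
  | (k + 2), z => 2 * z * hermiteP (k + 1) z - 2 * ((k : ℂ) + 1) * hermiteP k z

/-
Since `H_k(z) = 2^(k/2) He_k(√2 z)` for the probabilists' polynomial `He_k`, the coefficient of
`z^j` in `H_k` vanishes unless `k = 2m + j`, and then it has absolute value `2^j k! / (m! j!)`.
Log-convexity of `Γ` gives `Γ(k/2 + 1) ≤ √2 (k/2)^(j/2) m!`, so this is at most
`√2 (k! / Γ(k/2 + 1)) (√(2k))^j / j!`. Summing over `j` against the exponential series yields
`|H_k(z)| ≤ √2 (k! / Γ(k/2 + 1)) e^{|z|√(2k)}` for every `z`.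
-/

section Gamma

open scoped Nat

lemma Gamma_add_half_le_sqrt_mul_Gamma {x : ℝ} (hx : 0 < x) :
    Real.Gamma (x + 1 / 2) ≤ √x * Real.Gamma x := by
  have hΓ : 0 < Real.Gamma x := Real.Gamma_pos_of_pos hx
  have log_convex := Real.Gamma_mul_add_mul_le_rpow_Gamma_mul_rpow_Gamma (s := x) (t := x + 1)
    (a := 1 / 2) (b := 1 / 2) hx (by positivity) (by norm_num) (by norm_num) (by norm_num)
  calc Real.Gamma (x + 1 / 2)
      = Real.Gamma (1 / 2 * x + 1 / 2 * (x + 1)) := by ring_nf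
    _ ≤ √(Real.Gamma x) * √(Real.Gamma (x + 1)) := by
      simpa only [Real.sqrt_eq_rpow] using log_convex
    _ = √x * (√(Real.Gamma x) * √(Real.Gamma x)) := by
      rw [Real.Gamma_add_one hx.ne', Real.sqrt_mul hx.le]; ring
    _ = √x * Real.Gamma x := by rw [Real.mul_self_sqrt hΓ.le]

lemma Gamma_add_natCast_div_two_le {x : ℝ} (hx : 1 ≤ x) (j : ℕ) :
    Real.Gamma (x + j / 2) ≤ √2 * √(x + j / 2 - 1) ^ j * Real.Gamma x := by
  have hx0 : 0 < x := by linarith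
  have hΓ : 0 < Real.Gamma x := Real.Gamma_pos_of_pos hx0
  induction j using Nat.twoStepInduction with
  | zero =>
    simpa using le_mul_of_one_le_left hΓ.le (Real.one_le_sqrt.2 one_le_two)
  | one =>
    have sqrt_le : √x ≤ √2 * √(x + 1 / 2 - 1) := by
      rw [← Real.sqrt_mul zero_le_two]
      exact Real.sqrt_le_sqrt (by linarith)
    calc Real.Gamma (x + (1 : ℕ) / 2)
        ≤ √x * Real.Gamma x := by simpa using Gamma_add_half_le_sqrt_mul_Gamma hx0
      _ ≤ √2 * √(x + (1 : ℕ) / 2 - 1) ^ 1 * Real.Gamma x := by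
        rw [Nat.cast_one, pow_one]; gcongr
  | more j ih _ =>
    have hy : 0 < x + j / 2 := by positivity
    have shift : x + ((j + 2 : ℕ) : ℝ) / 2 = x + j / 2 + 1 := by push_cast; ring
    calc Real.Gamma (x + ((j + 2 : ℕ) : ℝ) / 2)
        = (x + j / 2) * Real.Gamma (x + j / 2) := by rw [shift, Real.Gamma_add_one hy.ne']
      _ ≤ (x + j / 2) * (√2 * √(x + j / 2) ^ j * Real.Gamma x) := by
        gcongr
        refine ih.trans ?_
        gcongr
        linarith
      _ = √2 * (√(x + j / 2) ^ j * √(x + j / 2) ^ 2) * Real.Gamma x := by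
        rw [Real.sq_sqrt hy.le]; ring
      _ = √2 * √(x + ((j + 2 : ℕ) : ℝ) / 2 - 1) ^ (j + 2) * Real.Gamma x := by
        rw [shift, add_sub_cancel_right, ← pow_add]

lemma sqrt_two_pow_mul_Gamma_le (m j : ℕ) :
    √2 ^ j * Real.Gamma ((2 * m + j : ℕ) / 2 + 1) ≤ √2 * √(2 * m + j : ℕ) ^ j * m ! := by
  have half_add : ((2 * m + j : ℕ) : ℝ) / 2 = m + j / 2 := by push_cast; ring
  calc √2 ^ j * Real.Gamma ((2 * m + j : ℕ) / 2 + 1)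
      = √2 ^ j * Real.Gamma (m + 1 + j / 2) := by rw [half_add, add_right_comm]
    _ ≤ √2 ^ j * (√2 * √(m + 1 + j / 2 - 1) ^ j * Real.Gamma (m + 1)) := by
      gcongr
      exact Gamma_add_natCast_div_two_le (by simp) j
    _ = √2 ^ j * (√2 * (√(2 * m + j : ℕ) ^ j / √2 ^ j) * m !) := by
      rw [add_right_comm, add_sub_cancel_right, ← half_add, Real.sqrt_div (Nat.cast_nonneg _),
        div_pow, Real.Gamma_nat_eq_factorial]
    _ = √2 * √(2 * m + j : ℕ) ^ j * m ! := by field_simp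

end Gamma

section Hermite

open Polynomial
open scoped Nat

lemma derivative_hermite_succ (n : ℕ) :
    derivative (hermite (n + 1)) = (n + 1 : ℤ[X]) * hermite n := by
  induction n with
  | zero => simp
  | succ n ih =>
    rw [hermite_succ (n + 1), derivative_sub, derivative_mul, derivative_X, ih, derivative_mul,
      hermite_succ n]
    simp only [derivative_add, derivative_natCast, derivative_one]
    push_cast
    ring

lemma hermite_add_two (n : ℕ) :
    hermite (n + 2) = X * hermite (n + 1) - (n + 1 : ℤ[X]) * hermite n := by
  rw [hermite_succ (n + 1), derivative_hermite_succ]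

lemma hermiteP_eq_aeval_hermite (k : ℕ) (z : ℂ) :
    hermiteP k z = (√2 : ℂ) ^ k * aeval ((√2 : ℂ) * z) (hermite k) := by
  have sq_sqrt_two : (√2 : ℂ) ^ 2 = 2 := by
    exact_mod_cast Real.sq_sqrt zero_le_two
  induction k using Nat.twoStepInduction with
  | zero => simp [hermiteP]
  | one =>
    rw [hermiteP, hermite_one, aeval_X]
    linear_combination -z * sq_sqrt_two
  | more k ih ih_succ =>
    rw [hermiteP, ih, ih_succ, hermite_add_two]
    simp only [map_sub, map_mul, map_add, map_natCast, map_one, aeval_X]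
    linear_combination
      ((k + 1) * (√2 : ℂ) ^ k * aeval ((√2 : ℂ) * z) (hermite k) -
        z * (√2 : ℂ) ^ (k + 1) * aeval ((√2 : ℂ) * z) (hermite (k + 1))) * sq_sqrt_two

lemma two_pow_mul_factorial_mul_doubleFactorial (m : ℕ) :
    2 ^ m * m ! * (2 * m - 1)‼ = (2 * m)! := by
  cases m with
  | zero => rfl
  | succ m =>
    rw [← Nat.doubleFactorial_two_mul]
    exact (Nat.factorial_eq_mul_doubleFactorial (2 * m + 1)).symm

lemma abs_coeff_hermite_two_mul_add (m j : ℕ) :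
    |((hermite (2 * m + j)).coeff j : ℝ)| = (2 * m + j)! / (2 ^ m * m ! * j !) := by
  have doubleFactorial_mul_choose :
      (2 * m - 1)‼ * (2 * m + j).choose j * (2 ^ m * m ! * j !) = (2 * m + j)! := by
    rw [← Nat.add_choose_mul_factorial_mul_factorial,
      ← two_pow_mul_factorial_mul_doubleFactorial]
    ring
  rw [coeff_hermite_explicit, eq_div_iff (by positivity)]
  push_cast
  rw [abs_mul, abs_mul, abs_neg_one_pow, one_mul, Nat.abs_cast, Nat.abs_cast]
  exact_mod_cast doubleFactorial_mul_choose

lemma coeff_hermite_eq_zero_of_forall_ne {k j : ℕ} (h : ∀ m, k ≠ 2 * m + j) :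
    (hermite k).coeff j = 0 := by
  rcases lt_or_ge k j with hlt | hge
  · exact coeff_hermite_of_lt hlt
  · refine coeff_hermite_of_odd_add (Nat.not_even_iff_odd.1 fun ⟨r, hr⟩ => h (r - j) ?_)
    omega

lemma sqrt_two_pow_mul_abs_coeff_hermite_le (k j : ℕ) :
    √2 ^ k * |((hermite k).coeff j : ℝ)| ≤
      √2 * (Real.Gamma (k + 1) / Real.Gamma (k / 2 + 1)) * (√k ^ j / j !) := by
  have hΓ : 0 < Real.Gamma ((k : ℝ) / 2 + 1) := Real.Gamma_pos_of_pos (by positivity)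
  rw [Real.Gamma_nat_eq_factorial]
  by_cases hkj : ∃ m, k = 2 * m + j
  · obtain ⟨m, rfl⟩ := hkj
    set k := 2 * m + j with hk
    have sqrt_two_pow : √2 ^ k = 2 ^ m * √2 ^ j := by
      rw [hk, pow_add, pow_mul, Real.sq_sqrt zero_le_two]
    calc √2 ^ k * |((hermite k).coeff j : ℝ)|
        = k ! / (m ! * j !) * √2 ^ j := by
          rw [abs_coeff_hermite_two_mul_add, ← hk, sqrt_two_pow]; field_simp
      _ ≤ k ! / (m ! * j !) * (√2 * √k ^ j * m ! / Real.Gamma ((k : ℝ) / 2 + 1)) := by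
          gcongr
          rw [le_div_iff₀ hΓ, hk]
          exact sqrt_two_pow_mul_Gamma_le m j
      _ = √2 * (k ! / Real.Gamma ((k : ℝ) / 2 + 1)) * (√k ^ j / j !) := by field_simp
  · rw [coeff_hermite_eq_zero_of_forall_ne (not_exists.1 hkj), Int.cast_zero, abs_zero, mul_zero]
    positivity

lemma norm_hermiteP_le (k : ℕ) (z : ℂ) :
    ‖hermiteP k z‖ ≤
      √2 * (Real.Gamma (k + 1) / Real.Gamma (k / 2 + 1)) * Real.exp (‖z‖ * √(2 * k)) := by
  set G : ℝ := Real.Gamma (k + 1) / Real.Gamma (k / 2 + 1)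
  have norm_sqrt_two : ‖(√2 : ℂ)‖ = √2 := Complex.norm_of_nonneg (Real.sqrt_nonneg 2)
  have norm_term (j : ℕ) :
      ‖(√2 : ℂ) ^ k * ((hermite k).coeff j • ((√2 : ℂ) * z) ^ j)‖ =
        √2 ^ k * |((hermite k).coeff j : ℝ)| * (√2 * ‖z‖) ^ j := by
    rw [zsmul_eq_mul, norm_mul, norm_mul, norm_pow, norm_pow, norm_mul, norm_sqrt_two,
      Complex.norm_intCast, mul_assoc]
  calc ‖hermiteP k z‖
      ≤ ∑ j ∈ Finset.range (k + 1), √2 ^ k * |((hermite k).coeff j : ℝ)| * (√2 * ‖z‖) ^ j := by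
        rw [hermiteP_eq_aeval_hermite, aeval_eq_sum_range, natDegree_hermite, Finset.mul_sum]
        exact norm_sum_le_of_le _ fun j _ => (norm_term j).le
    _ ≤ ∑ j ∈ Finset.range (k + 1), √2 * G * (√k ^ j / j !) * (√2 * ‖z‖) ^ j := by
        refine Finset.sum_le_sum fun j _ => ?_
        exact mul_le_mul_of_nonneg_right (sqrt_two_pow_mul_abs_coeff_hermite_le k j) (by positivity)
    _ = √2 * G * ∑ j ∈ Finset.range (k + 1), (‖z‖ * √(2 * k)) ^ j / j ! := by
        rw [Finset.mul_sum, Real.sqrt_mul zero_le_two]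
        exact Finset.sum_congr rfl fun j _ => by simp only [mul_pow]; ring
    _ ≤ √2 * G * Real.exp (‖z‖ * √(2 * k)) := by
        gcongr
        exact Real.sum_le_exp_of_nonneg (by positivity) (k + 1)

end Hermite

lemma norm_exp_neg_sq_div_two_le (z : ℂ) :
    ‖Complex.exp (-z ^ 2 / 2)‖ ≤ Real.exp (‖z‖ ^ 2 / 2) := by
  have norm_eq : ‖-z ^ 2 / 2‖ = ‖z‖ ^ 2 / 2 := by
    rw [norm_div, norm_neg, norm_pow, Complex.norm_ofNat]
  exact norm_eq ▸ Complex.norm_exp_le_exp_norm (-z ^ 2 / 2)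

theorem stmt16_general (k : ℕ) (z : ℂ) :
    ‖Complex.exp (-z ^ 2 / 2) * hermiteP k z‖ ≤
      Real.exp (‖z‖ ^ 2 / 2) * √2 * (Real.Gamma (k + 1) / Real.Gamma (k / 2 + 1)) *
        Real.exp (‖z‖ * √(2 * k)) := by
  rw [norm_mul, mul_assoc (Real.exp _), mul_assoc (Real.exp _)]
  exact mul_le_mul (norm_exp_neg_sq_div_two_le z) (norm_hermiteP_le k z) (norm_nonneg _)
    (Real.exp_nonneg _)

theorem stmt16 (A : ℝ) (hA : 0 < A) :
    ∃ M : ℝ, 0 < M ∧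
      ∀ (k : ℕ) (z : ℂ), ‖z‖ ≤ A →
        ‖Complex.exp (-z ^ 2 / 2) * hermiteP k z‖
          ≤ M * (Real.Gamma ((k : ℝ) + 1) / Real.Gamma ((k : ℝ) / 2 + 1)) *
              Real.exp (A * Real.sqrt (2 * (k : ℝ))) := by
  exact ⟨Real.exp (A ^ 2 / 2) * √2, by positivity, fun k z hz =>
    (stmt16_general k z).trans (by gcongr)⟩
end

section
/- Define E(t,x) := e^{i x²/(4t)} / √(4π i t) for real t ≠ 0 and x ∈ ℝ. Let t₁ > 0 and L > 0. Then there exist constants M > 0 and R > 0 such that for all integers k, l ≥ 0 and all (t,x) with |t| ≥ t₁ and |x| ≤ L, |∂_x^k ∂_t^l E(t,x)| ≤ M · (k!)^{1/2} / (R/√2)^k · l! / (R/2)^{2l}. -/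
open MeasureTheory Complex Real Set Filter

/-- The fundamental solution `E(t,x) = e^{i x²/(4t)} / √(4π i t)` of the 1D Schrödinger
equation, the complex square root being the principal branch. -/
noncomputable def E (t x : ℝ) : ℂ :=
  Complex.exp (Complex.I * (x : ℂ) ^ 2 / (4 * (t : ℂ))) /
    ((4 * (Real.pi : ℂ) * Complex.I * (t : ℂ)) ^ ((1 : ℂ) / 2))

/-- The odd extension of `θ₀ : (0,1) → ℂ` to `ℝ`. -/
noncomputable def thetaOdd (θ₀ : ℝ → ℂ) (x : ℝ) : ℂ :=
  if 0 < x ∧ x < 1 then θ₀ x else if -1 < x ∧ x < 0 then -θ₀ (-x) else 0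

/-- `θ⁻(t,x) = ∫_{-1}^1 E(t, x-y) θ₀^odd(y) dy`. -/
noncomputable def thetaMinus (θ₀ : ℝ → ℂ) (t x : ℝ) : ℂ :=
  ∫ y in Set.Ioo (-1 : ℝ) 1, E t (x - y) * thetaOdd θ₀ y

/-!
In the space variable `E t` solves `∂ₓE = a x E` with `a = i / (2t)`, so the Leibniz rule yields
`∂ₓⁿ⁺¹E = a (x ∂ₓⁿE + n ∂ₓⁿ⁻¹E)`. Since `n √((n - 1)!) ≤ √((n + 1)!)`, this recurrence propagates
bounds of the form `|∂ₓⁿE| ≤ M Cⁿ √(n!)`, uniformly for `|t| ≥ t₁` and `|x| ≤ L`. The Schrödinger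
equation trades `l` time derivatives for `2l` space derivatives, and `(2l + k)! ≤ 2ᵏ 16ˡ k! (l!)²`
splits the square root of the factorial into the two required factors.
-/

section IteratedDeriv

variable {𝕜 F : Type*} [NontriviallyNormedField 𝕜] [NormedAddCommGroup F] [NormedSpace 𝕜 F]

-- At `n = 0` the truncated `n - 1` is harmless, its term being multiplied by `0`.
lemma iteratedDeriv_id_smul {g : 𝕜 → F} {n : ℕ} {x : 𝕜} (hg : ContDiffAt 𝕜 n g x) :
    iteratedDeriv n (fun y => y • g y) x =
      x • iteratedDeriv n g x + n • iteratedDeriv (n - 1) g x := by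
  have leibniz := iteratedDerivWithin_smul (mem_univ x) uniqueDiffOn_univ
    (contDiffAt_id (n := n)).contDiffWithinAt hg.contDiffWithinAt
  simp only [iteratedDerivWithin_univ, iteratedDeriv_id] at leibniz
  change iteratedDeriv n ((id : 𝕜 → 𝕜) • g) x = _
  rw [leibniz]
  rcases n with _ | n
  · simp
  · rw [Finset.sum_range_succ', Finset.sum_range_succ']
    simp [add_comm]

lemma iteratedDeriv_eq_pow_smul_of_hasDerivAt {R : Type*} [Monoid R] [DistribMulAction R F]
    [SMulCommClass 𝕜 R F] [ContinuousConstSMul R F] {g : ℕ → 𝕜 → F} {c : R} {s : Set 𝕜}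
    (hs : IsOpen s) (hg : ∀ n, ∀ t ∈ s, HasDerivAt (g n) (c • g (n + 1) t) t) (n : ℕ) :
    EqOn (iteratedDeriv n (g 0)) (c ^ n • g n) s := by
  induction n with
  | zero => simp [EqOn]
  | succ n ih =>
    intro t ht
    rw [iteratedDeriv_succ, (ih.eventuallyEq_of_mem (hs.mem_nhds ht)).deriv_eq,
      ((hg n t ht).const_smul (c ^ n)).deriv, smul_smul, ← pow_succ, Pi.smul_apply]

end IteratedDeriv

lemma succ_mul_sqrt_factorial_le (n : ℕ) :
    ((n : ℝ) + 1) * √(n.factorial : ℝ) ≤ √((n + 2).factorial : ℝ) := by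
  apply Real.le_sqrt_of_sq_le
  rw [mul_pow, Real.sq_sqrt (Nat.cast_nonneg _), Nat.factorial_succ, Nat.factorial_succ]
  push_cast
  rw [← mul_assoc]
  gcongr
  nlinarith

lemma le_mul_pow_mul_sqrt_factorial_of_succ_le {u : ℕ → ℝ} {b L C : ℝ} (hb : 0 ≤ b) (hL : 0 ≤ L)
    (hC : 0 < C) (hbC : b * (L * C + 1) ≤ C ^ 2) (hu₀ : 0 ≤ u 0)
    (hu : ∀ n, u (n + 1) ≤ b * (L * u n + n * u (n - 1))) (n : ℕ) :
    u n ≤ u 0 * C ^ n * √(n.factorial : ℝ) := by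
  induction n using Nat.twoStepInduction with
  | zero => simp
  | one =>
    have hbL : b * L ≤ C := by
      refine le_of_mul_le_mul_right ?_ hC
      linarith
    calc u 1 ≤ b * (L * u 0 + (0 : ℕ) * u (0 - 1)) := hu 0
      _ = u 0 * (b * L) := by push_cast; ring
      _ ≤ u 0 * C := by gcongr
      _ = u 0 * C ^ 1 * √(Nat.factorial 1 : ℝ) := by simp
  | more n ih₀ ih₁ =>
    have hmono : √((n + 1).factorial : ℝ) ≤ √((n + 2).factorial : ℝ) := by
      gcongr
      omega
    calc u (n + 2) ≤ b * (L * u (n + 1) + (n + 1) * u n) := by simpa using hu (n + 1)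
      _ ≤ b * (L * (u 0 * C ^ (n + 1) * √((n + 1).factorial : ℝ)) +
            (n + 1) * (u 0 * C ^ n * √(n.factorial : ℝ))) := by gcongr
      _ = u 0 * C ^ n * (b * (L * C * √((n + 1).factorial : ℝ) +
            (n + 1) * √(n.factorial : ℝ))) := by ring
      _ ≤ u 0 * C ^ n * (b * (L * C * √((n + 2).factorial : ℝ) + √((n + 2).factorial : ℝ))) := by
        gcongr
        exact succ_mul_sqrt_factorial_le n
      _ = u 0 * C ^ n * (b * (L * C + 1)) * √((n + 2).factorial : ℝ) := by ring
      _ ≤ u 0 * C ^ n * C ^ 2 * √((n + 2).factorial : ℝ) := by gcongr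
      _ = u 0 * C ^ (n + 2) * √((n + 2).factorial : ℝ) := by ring

lemma factorial_add_le_two_pow_mul (m n : ℕ) :
    (m + n).factorial ≤ 2 ^ (m + n) * (m.factorial * n.factorial) := by
  rw [← Nat.add_choose_mul_factorial_mul_factorial m n, mul_assoc]
  gcongr
  exact Nat.choose_le_two_pow _ _

lemma factorial_two_mul_add_le (l k : ℕ) :
    (2 * l + k).factorial ≤ 2 ^ k * 2 ^ (4 * l) * k.factorial * l.factorial ^ 2 :=
  calc (2 * l + k).factorial
      ≤ 2 ^ (2 * l + k) * ((2 * l).factorial * k.factorial) := factorial_add_le_two_pow_mul _ _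
    _ ≤ 2 ^ (2 * l + k) * (2 ^ (l + l) * (l.factorial * l.factorial) * k.factorial) := by
      gcongr
      rw [two_mul]
      exact factorial_add_le_two_pow_mul l l
    _ = 2 ^ k * 2 ^ (4 * l) * k.factorial * l.factorial ^ 2 := by ring

lemma sqrt_factorial_two_mul_add_le (l k : ℕ) :
    √((2 * l + k).factorial : ℝ) ≤ √2 ^ k * √(k.factorial : ℝ) * (2 ^ (2 * l) * l.factorial) := by
  refine Real.sqrt_le_iff.2 ⟨by positivity, ?_⟩
  calc ((2 * l + k).factorial : ℝ) ≤ 2 ^ k * 2 ^ (4 * l) * k.factorial * l.factorial ^ 2 :=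
        mod_cast factorial_two_mul_add_le l k
    _ = (√2 ^ 2) ^ k * √(k.factorial : ℝ) ^ 2 * (2 ^ (2 * l) * l.factorial) ^ 2 := by
      rw [Real.sq_sqrt zero_le_two, Real.sq_sqrt (Nat.cast_nonneg _)]
      ring
    _ = (√2 ^ k * √(k.factorial : ℝ) * (2 ^ (2 * l) * l.factorial)) ^ 2 := by ring

section FundamentalSolution

variable {t x : ℝ}

lemma norm_E (t x : ℝ) : ‖E t x‖ = (√(4 * π * |t|))⁻¹ := by
  have phase : I * (x : ℂ) ^ 2 / (4 * (t : ℂ)) = ((x ^ 2 / (4 * t) : ℝ) : ℂ) * I := by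
    push_cast
    ring
  have exponent : (1 : ℂ) / 2 = ((1 / 2 : ℝ) : ℂ) := by push_cast; rfl
  rw [E, norm_div, phase, norm_exp_ofReal_mul_I, exponent, norm_cpow_real,
    ← Real.sqrt_eq_rpow, one_div]
  simp [abs_of_pos Real.pi_pos]

lemma contDiff_E (t : ℝ) {n : WithTop ℕ∞} : ContDiff ℝ n (E t) := by
  have h_coe : ContDiff ℝ n (fun x : ℝ => (x : ℂ)) := ofRealCLM.contDiff
  unfold E
  fun_prop

lemma deriv_E (t : ℝ) : deriv (E t) = fun x => I / (2 * (t : ℂ)) * (x • E t x) := by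
  funext x
  have h_coe : HasDerivAt (fun y : ℝ => (y : ℂ)) 1 x := ofRealCLM.hasDerivAt
  have h := (((h_coe.pow 2).const_mul I).div_const (4 * (t : ℂ))).cexp.div_const
    ((4 * (π : ℂ) * I * (t : ℂ)) ^ ((1 : ℂ) / 2))
  refine h.deriv.trans ?_
  simp only [E, Pi.pow_apply, real_smul]
  push_cast
  ring

lemma iteratedDeriv_E_succ (n : ℕ) (t x : ℝ) :
    iteratedDeriv (n + 1) (E t) x = I / (2 * (t : ℂ)) *
      (x * iteratedDeriv n (E t) x + n * iteratedDeriv (n - 1) (E t) x) := by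
  rw [iteratedDeriv_succ', deriv_E, iteratedDeriv_const_mul_field,
    iteratedDeriv_id_smul (contDiff_E t).contDiffAt, real_smul, nsmul_eq_mul]

-- Written in terms of `a = i / (2t)`: with `∂ₜa = 2i a²`, differentiating the recurrence in time
-- gives back the recurrence.
lemma hasDerivAt_I_div_two_mul (ht : t ≠ 0) :
    HasDerivAt (fun s : ℝ => I / (2 * (s : ℂ))) (2 * I * (I / (2 * (t : ℂ))) ^ 2) t := by
  have h_coe : HasDerivAt (fun s : ℝ => (s : ℂ)) 1 t := ofRealCLM.hasDerivAt
  refine ((hasDerivAt_const t I).div (h_coe.const_mul 2) (by simpa using ht)).congr_deriv ?_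
  have ht' : (t : ℂ) ≠ 0 := ofReal_ne_zero.2 ht
  field_simp
  simp

lemma hasDerivAt_const_mul_cpow {c : ℂ} (r : ℂ) (hc : c * t ∈ slitPlane) :
    HasDerivAt (fun s : ℝ => (c * s) ^ r) (r * (c * t) ^ r / t) t := by
  have hct : c * t ≠ 0 := slitPlane_ne_zero hc
  have h := (((hasDerivAt_id (t : ℂ)).const_mul c).cpow_const (c := r) hc).comp_ofReal
  refine h.congr_deriv ?_
  have ⟨hc₀, ht₀⟩ := mul_ne_zero_iff.1 hct
  rw [id, cpow_sub _ _ hct, cpow_one]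
  field_simp

lemma hasDerivAt_cexp_div_const_mul (ht : t ≠ 0) (z c : ℂ) :
    HasDerivAt (fun s : ℝ => cexp (z / (c * s))) (-z / (c * t ^ 2) * cexp (z / (c * t))) t := by
  have h := ((hasDerivAt_inv (ofReal_ne_zero.2 ht)).const_mul (z / c)).cexp.comp_ofReal
  simp only [← div_eq_mul_inv, div_div] at h
  refine h.congr_deriv ?_
  ring

lemma hasDerivAt_E_time (ht : t ≠ 0) (x : ℝ) :
    HasDerivAt (fun s => E s x) (I * iteratedDeriv 2 (E t) x) t := by
  have ht' : (t : ℂ) ≠ 0 := ofReal_ne_zero.2 ht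
  have h_slit : 4 * (π : ℂ) * I * t ∈ slitPlane := by
    right
    simp [ht, Real.pi_ne_zero]
  have h_sqrt : (4 * (π : ℂ) * I * t) ^ ((1 : ℂ) / 2) ≠ 0 := by
    simp [cpow_eq_zero_iff, slitPlane_ne_zero h_slit]
  have h := (hasDerivAt_cexp_div_const_mul ht (I * (x : ℂ) ^ 2) 4).div
    (hasDerivAt_const_mul_cpow (1 / 2) h_slit) h_sqrt
  have h_quotient : HasDerivAt (fun s => E s x)
      ((-(I * (x : ℂ) ^ 2) / (4 * t ^ 2) - 1 / (2 * t)) * E t x) t := by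
    refine h.congr_deriv ?_
    rw [E]
    field_simp
  refine h_quotient.congr_deriv ?_
  rw [iteratedDeriv_E_succ 1, iteratedDeriv_E_succ 0, iteratedDeriv_zero]
  push_cast
  field_simp
  linear_combination (-8 * t * E t x - 4 * I * x ^ 2 * E t x) * I_sq

lemma hasDerivAt_iteratedDeriv_E_time (ht : t ≠ 0) (x : ℝ) (n : ℕ) :
    HasDerivAt (fun s => iteratedDeriv n (E s) x) (I * iteratedDeriv (n + 2) (E t) x) t := by
  induction n using Nat.strong_induction_on with
  | _ n ih =>
    rcases n with _ | n
    · simpa using hasDerivAt_E_time ht x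
    have h_lower : HasDerivAt (fun s => (n : ℂ) * iteratedDeriv (n - 1) (E s) x)
        (n * (I * iteratedDeriv (n + 1) (E t) x)) t := by
      rcases n with _ | n
      · simpa using hasDerivAt_const t (0 : ℂ)
      · exact (ih n (by omega)).const_mul _
    have h := (hasDerivAt_I_div_two_mul ht).mul (((ih n (by omega)).const_mul (x : ℂ)).add h_lower)
    simp only [iteratedDeriv_E_succ n]
    refine h.congr_deriv ?_
    have h_rec := iteratedDeriv_E_succ n t x
    rw [iteratedDeriv_E_succ (n + 2)]
    simp only [Pi.add_apply, Nat.add_succ_sub_one]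
    push_cast
    linear_combination (-2 * I * (I / (2 * (t : ℂ)))) * h_rec

lemma iteratedDeriv_time_E (ht : t ≠ 0) (x : ℝ) (l : ℕ) :
    iteratedDeriv l (fun s => E s x) t = I ^ l * iteratedDeriv (2 * l) (E t) x := by
  have h := iteratedDeriv_eq_pow_smul_of_hasDerivAt
    (g := fun n s => iteratedDeriv (2 * n) (E s) x) (c := I) isOpen_ne
    (fun n s hs => hasDerivAt_iteratedDeriv_E_time hs x (2 * n)) l ht
  simpa using h

lemma iteratedDeriv_space_iteratedDeriv_time_E (ht : t ≠ 0) (x : ℝ) (k l : ℕ) :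
    iteratedDeriv k (fun y => iteratedDeriv l (fun s => E s y) t) x =
      I ^ l * iteratedDeriv (2 * l + k) (E t) x := by
  simp only [iteratedDeriv_time_E ht, iteratedDeriv_const_mul_field]
  simp only [iteratedDeriv_eq_iterate, add_comm (2 * l), Function.iterate_add_apply]

lemma norm_iteratedDeriv_E_succ_le (n : ℕ) (t x : ℝ) :
    ‖iteratedDeriv (n + 1) (E t) x‖ ≤
      (2 * |t|)⁻¹ * (|x| * ‖iteratedDeriv n (E t) x‖ + n * ‖iteratedDeriv (n - 1) (E t) x‖) := by
  rw [iteratedDeriv_E_succ, norm_mul, norm_div, norm_I, one_div, norm_mul,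
    Complex.norm_ofNat, Complex.norm_real, Real.norm_eq_abs]
  gcongr
  refine (norm_add_le _ _).trans_eq ?_
  rw [norm_mul, norm_mul, Complex.norm_real, Complex.norm_natCast, Real.norm_eq_abs]

lemma norm_iteratedDeriv_E_le {C : ℝ} (hC : 0 < C) (htxC : (2 * |t|)⁻¹ * (|x| * C + 1) ≤ C ^ 2)
    (n : ℕ) : ‖iteratedDeriv n (E t) x‖ ≤ ‖E t x‖ * C ^ n * √(n.factorial : ℝ) := by
  simpa only [iteratedDeriv_zero] using
    le_mul_pow_mul_sqrt_factorial_of_succ_le (u := fun n => ‖iteratedDeriv n (E t) x‖)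
      (by positivity) (abs_nonneg x) hC htxC (norm_nonneg _)
      (fun n => norm_iteratedDeriv_E_succ_le n t x) n

lemma exists_norm_iteratedDeriv_E_le {t₁ L : ℝ} (ht₁ : 0 < t₁) (hL : 0 ≤ L) :
    ∃ M C : ℝ, 0 < M ∧ 0 < C ∧ ∀ (n : ℕ) (t x : ℝ), t₁ ≤ |t| → |x| ≤ L →
      ‖iteratedDeriv n (E t) x‖ ≤ M * C ^ n * √(n.factorial : ℝ) := by
  set C := 1 + (2 * t₁)⁻¹ * (L + 1)
  have hC₁ : 1 ≤ C := le_add_of_nonneg_right (by positivity)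
  refine ⟨(√(4 * π * t₁))⁻¹, C, by positivity, by positivity, fun n t x ht hx => ?_⟩
  have htxC : (2 * |t|)⁻¹ * (|x| * C + 1) ≤ C ^ 2 :=
    calc (2 * |t|)⁻¹ * (|x| * C + 1) ≤ (2 * t₁)⁻¹ * (L * C + C) := by gcongr
      _ = (2 * t₁)⁻¹ * (L + 1) * C := by ring
      _ ≤ C * C := by gcongr; exact le_add_of_nonneg_left zero_le_one
      _ = C ^ 2 := (sq C).symm
  refine (norm_iteratedDeriv_E_le (by positivity) htxC n).trans ?_
  rw [norm_E]
  gcongr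

end FundamentalSolution

theorem stmt17 (t₁ L : ℝ) (ht₁ : 0 < t₁) (hL : 0 < L) :
    ∃ M R : ℝ, 0 < M ∧ 0 < R ∧
      ∀ (k l : ℕ) (t x : ℝ), t₁ ≤ |t| → |x| ≤ L →
        ‖iteratedDeriv k (fun x' => iteratedDeriv l (fun t' => E t' x') t) x‖
          ≤ M * ((k.factorial : ℝ) ^ ((1 : ℝ) / 2) / (R / Real.sqrt 2) ^ k) *
              ((l.factorial : ℝ) / (R / 2) ^ (2 * l)) := by
  obtain ⟨M, C, hM, hC, hE⟩ := exists_norm_iteratedDeriv_E_le ht₁ hL.le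
  refine ⟨M, C⁻¹, hM, inv_pos.2 hC, fun k l t x ht hx => ?_⟩
  have ht₀ : t ≠ 0 := abs_pos.1 (ht₁.trans_le ht)
  rw [iteratedDeriv_space_iteratedDeriv_time_E ht₀, norm_mul, norm_pow, norm_I, one_pow,
    one_mul, ← Real.sqrt_eq_rpow]
  calc ‖iteratedDeriv (2 * l + k) (E t) x‖
      ≤ M * C ^ (2 * l + k) * √((2 * l + k).factorial : ℝ) := hE _ t x ht hx
    _ ≤ M * C ^ (2 * l + k) * (√2 ^ k * √(k.factorial : ℝ) * (2 ^ (2 * l) * l.factorial)) := by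
      gcongr
      exact sqrt_factorial_two_mul_add_le l k
    _ = M * (√(k.factorial : ℝ) / (C⁻¹ / √2) ^ k) * (l.factorial / (C⁻¹ / 2) ^ (2 * l)) := by
      simp only [div_pow, inv_pow, pow_add]
      field_simp
end
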